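/- arXiv:2505.23211 — 8 statements merged into one kernel-verified Lean document; each statement's English description precedes it below -/
import Mathlib

section
/- Let 0<q<∞, let Φ be an almost increasing function in the class 𝓛, and let ε > 0. Then there exists a constant C > 0, depending only on q, Φ and ε, such that for every positive Borel measure μ on 𝔻 and every measurable function f: 𝔻 → ℂ one has ∫_𝔻 |f(z)|^q Φ(1/(1−|z|)) dμ(z) ≤ C·( ∫_𝔻 (1−|z|)^{−ε} dμ(z) + ∫_𝔻 |f(z)|^q Φ(|f(z)|) dμ(z) ). -/
open MeasureTheory Complex Filter

noncomputable section

/-- The open unit disk in the complex plane. -/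
def unitDisk : Set ℂ := {z : ℂ | ‖z‖ < 1}

/-- The Lebesgue area measure on `ℂ`, normalized so that the unit disk has measure `1`. -/
def areaM : Measure ℂ := (ENNReal.ofReal Real.pi)⁻¹ • (volume : Measure ℂ)

/-- A function `ω : ℂ → ℝ` is radial if its value depends only on the modulus. -/
def IsRadial (ω : ℂ → ℝ) : Prop := ∀ z w : ℂ, ‖z‖ = ‖w‖ → ω z = ω w

/-- A weight: nonnegative on the unit disk and integrable there. -/
def IsWeight (ω : ℂ → ℝ) : Prop :=
  (∀ z ∈ unitDisk, 0 ≤ ω z) ∧ IntegrableOn ω unitDisk areaM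

/-- The tail integral `ω̂(r) = ∫_r^1 ω(s) ds` of a radial weight. -/
def omHat (ω : ℂ → ℝ) (r : ℝ) : ℝ := ∫ s in Set.Ioo r 1, ω (s : ℂ)

/-- `ω̂(r) > 0` for all `0 ≤ r < 1`. -/
def OmHatPos (ω : ℂ → ℝ) : Prop := ∀ r : ℝ, 0 ≤ r → r < 1 → 0 < omHat ω r

/-- The class `D̂` of upper doubling radial weights. -/
def Dhat (ω : ℂ → ℝ) : Prop :=
  ∃ C > (1 : ℝ), ∀ r : ℝ, 0 ≤ r → r < 1 → omHat ω r ≤ C * omHat ω ((1 + r) / 2)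

/-- The class `Ď` of lower doubling radial weights. -/
def Dcheck (ω : ℂ → ℝ) : Prop :=
  ∃ C > (1 : ℝ), ∃ K > (1 : ℝ), ∀ r : ℝ, 0 ≤ r → r < 1 →
    omHat ω r ≥ C * omHat ω (1 - (1 - r) / K)

/-- The class `D = D̂ ∩ Ď`. -/
def DoublingD (ω : ℂ → ℝ) : Prop := Dhat ω ∧ Dcheck ω

/-- Almost increasing on `[0, ∞)`. -/
def AlmostIncreasing (Ψ : ℝ → ℝ) : Prop :=
  ∃ C > (0 : ℝ), ∀ x y : ℝ, 0 ≤ x → x ≤ y → Ψ x ≤ C * Ψ y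

/-- Almost decreasing on `[0, ∞)`. -/
def AlmostDecreasing (Ψ : ℝ → ℝ) : Prop :=
  ∃ C > (0 : ℝ), ∀ x y : ℝ, 0 ≤ x → x ≤ y → Ψ y ≤ C * Ψ x

/-- The class `𝓛`: positive, almost monotone functions with `Ψ(x) ≍ Ψ(x²)`. -/
def InClassL (Ψ : ℝ → ℝ) : Prop :=
  (∀ x : ℝ, 0 ≤ x → 0 < Ψ x) ∧
  (AlmostIncreasing Ψ ∨ AlmostDecreasing Ψ) ∧
  ∃ C : ℝ, 1 ≤ C ∧ ∀ x : ℝ, 0 ≤ x → C⁻¹ * Ψ (x ^ 2) ≤ Ψ x ∧ Ψ x ≤ C * Ψ (x ^ 2)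

/-- The pseudohyperbolic distance. -/
def pseudoDist (a z : ℂ) : ℝ := ‖(a - z) / (1 - (starRingEnd ℂ) a * z)‖

/-- The pseudohyperbolic disk `Δ(a, r)`. -/
def pseudoDisk (a : ℂ) (r : ℝ) : Set ℂ := {z ∈ unitDisk | pseudoDist a z < r}

/-- The Carleson square `S(a)`. -/
def carlesonSq (a : ℂ) : Set ℂ :=
  if a = 0 then unitDisk else
    {z ∈ unitDisk | ‖a‖ ≤ ‖z‖ ∧
      |Complex.arg (a * Complex.exp (-((Complex.arg z : ℂ)) * Complex.I))| ≤ (1 - ‖a‖) / 2}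

/-- `ω(E) = ∫_E ω dA`. -/
def wInt (ω : ℂ → ℝ) (E : Set ℂ) : ℝ := ∫ z in E, ω z ∂areaM

/-- `μ` is a `(q,Φ)`-Carleson measure for `A^p_{ω,Ψ}`. -/
def IsCarleson (q : ℝ) (Φ : ℝ → ℝ) (p : ℝ) (Ψ : ℝ → ℝ) (ω : ℂ → ℝ) (μ : Measure ℂ) : Prop :=
  ∀ M > (0 : ℝ), ∃ C > (0 : ℝ), ∀ f : ℂ → ℂ, AnalyticOnNhd ℂ f unitDisk →
    (∫⁻ z in unitDisk, ENNReal.ofReal (‖f z‖ ^ p * Ψ ‖f z‖) ∂areaM) ≤ ENNReal.ofReal M →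
    (∫⁻ z in unitDisk, ENNReal.ofReal (‖f z‖ ^ q * Φ ‖f z‖) ∂μ) ≤ ENNReal.ofReal C

/-- The integrand `Υ^{μ,ω}_{Φ,Ψ,r}(z)^{p/(p-q)} · ω̂(z)/(1-|z|)`. -/
def UpsilonInt (μ : Measure ℂ) (ω : ℂ → ℝ) (Φ Ψ : ℝ → ℝ) (p q r : ℝ) (z : ℂ) : ℝ :=
  ((μ (pseudoDisk z r)).toReal * Φ (1 / (1 - ‖z‖)) /
      (wInt ω (carlesonSq z) * Ψ (1 / (1 - ‖z‖)) ^ (q / p))) ^ (p / (p - q)) *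
    (omHat ω ‖z‖ / (1 - ‖z‖))

/-- The integrand for the differentiation operator, with the extra factor `(1-|z|)^{nq}`. -/
def UpsilonIntN (n : ℕ) (μ : Measure ℂ) (ω : ℂ → ℝ) (Φ Ψ : ℝ → ℝ) (p q r : ℝ) (z : ℂ) : ℝ :=
  ((μ (pseudoDisk z r)).toReal * Φ (1 / (1 - ‖z‖)) /
      (wInt ω (carlesonSq z) * Ψ (1 / (1 - ‖z‖)) ^ (q / p) * (1 - ‖z‖) ^ ((n : ℝ) * q))) ^
      (p / (p - q)) *
    (omHat ω ‖z‖ / (1 - ‖z‖))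

end
theorem aux_root (Φ : ℝ → ℝ) (C : ℝ) (hC : 1 ≤ C)
    (h : ∀ x : ℝ, 0 ≤ x → Φ (x ^ 2) ≤ C * Φ x) (n : ℕ) :
    ∀ t : ℝ, 0 ≤ t → Φ t ≤ C ^ n * Φ (t ^ ((1 / 2 : ℝ) ^ n)) := by
  induction n with
  | zero => intro t ht; simp
  | succ n ih =>
    intro t ht
    have h1 := ih t ht
    have h2 := h (t ^ ((1 / 2 : ℝ) ^ (n + 1))) (Real.rpow_nonneg ht _)
    have h3 : (t ^ ((1 / 2 : ℝ) ^ (n + 1))) ^ 2 = t ^ ((1 / 2 : ℝ) ^ n) := by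
      rw [← Real.rpow_natCast, ← Real.rpow_mul ht]
      congr 1
      push_cast
      ring
    rw [h3] at h2
    calc Φ t ≤ C ^ n * Φ (t ^ ((1 / 2 : ℝ) ^ n)) := h1
      _ ≤ C ^ n * (C * Φ (t ^ ((1 / 2 : ℝ) ^ (n + 1)))) := by gcongr
      _ = _ := by ring

theorem aux_growth (Φ : ℝ → ℝ) (hpos : ∀ x : ℝ, 0 ≤ x → 0 < Φ x) (C A : ℝ) (hC : 1 ≤ C)
    (hA : 0 < A) (h : ∀ x : ℝ, 0 ≤ x → Φ (x ^ 2) ≤ C * Φ x)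
    (hinc : ∀ x y : ℝ, 0 ≤ x → x ≤ y → Φ x ≤ A * Φ y) (η : ℝ) (hη : 0 < η) :
    ∃ K > (0 : ℝ), ∀ t : ℝ, 1 ≤ t → Φ t ≤ K * t ^ η := by
  set b : ℝ := max 2 (C ^ (1 / η)) with hb
  have hb2 : 2 ≤ b := le_max_left _ _
  have hbC : C ≤ b ^ η := by
    have h1 : (C ^ (1 / η)) ^ η ≤ b ^ η :=
      Real.rpow_le_rpow (Real.rpow_nonneg (by linarith) _) (le_max_right _ _) hη.le
    rwa [← Real.rpow_mul (by linarith), one_div_mul_cancel hη.ne', Real.rpow_one] at h1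
  have hK : 0 < A * Φ (b ^ 2) := mul_pos hA (hpos _ (by positivity))
  refine ⟨A * Φ (b ^ 2), hK, ?_⟩
  set K := A * Φ (b ^ 2) with hKdef
  have small : ∀ t : ℝ, 1 ≤ t → t ≤ b ^ 2 → Φ t ≤ K * t ^ η := by
    intro t ht htb
    have h1 : Φ t ≤ K := hinc t _ (by linarith) htb
    have h2 : 1 ≤ t ^ η := Real.one_le_rpow ht hη.le
    nlinarith
  have key : ∀ n : ℕ, ∀ t : ℝ, 1 ≤ t → t ≤ b ^ (2 ^ (n + 1)) → Φ t ≤ K * t ^ η := by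
    intro n
    induction n with
    | zero => intro t ht htb; exact small t ht (by simpa using htb)
    | succ n ih =>
      intro t ht htb
      by_cases hs : t ≤ b ^ 2
      · exact small t ht hs
      · push Not at hs
        have h0 : 0 ≤ t := by linarith
        have hsq : Real.sqrt t ^ 2 = t := Real.sq_sqrt h0
        have h1 : 1 ≤ Real.sqrt t := Real.one_le_sqrt.mpr ht
        have h2 : Real.sqrt t ≤ b ^ (2 ^ (n + 1)) := by
          rw [Real.sqrt_le_left (by positivity), ← pow_mul, ← pow_succ]
          exact htb
        have h3 := ih _ h1 h2
        have h4 := h (Real.sqrt t) (Real.sqrt_nonneg t)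
        rw [hsq] at h4
        have h5 : b ≤ Real.sqrt t := Real.le_sqrt_of_sq_le hs.le
        have h6 : C ≤ Real.sqrt t ^ η :=
          hbC.trans (Real.rpow_le_rpow (by linarith) h5 hη.le)
        have h7 : t ^ η = Real.sqrt t ^ η * Real.sqrt t ^ η := by
          rw [← Real.mul_rpow (Real.sqrt_nonneg t) (Real.sqrt_nonneg t), Real.mul_self_sqrt h0]
        have h8 : 0 ≤ Real.sqrt t ^ η := by positivity
        calc Φ t ≤ C * Φ (Real.sqrt t) := h4
          _ ≤ C * (K * Real.sqrt t ^ η) := by gcongr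
          _ ≤ Real.sqrt t ^ η * (K * Real.sqrt t ^ η) := by gcongr
          _ = K * t ^ η := by rw [h7]; ring
  intro t ht
  obtain ⟨n, hn⟩ := pow_unbounded_of_one_lt t (by linarith : (1 : ℝ) < b)
  refine key n t ht (hn.le.trans ?_)
  apply pow_le_pow_right₀ (by linarith)
  exact (Nat.lt_two_pow_self (n := n)).le.trans (Nat.pow_le_pow_right (by norm_num) (by omega))

theorem aux_pointwise (q : ℝ) (hq : 0 < q)
    (Φ : ℝ → ℝ) (hΦ : InClassL Φ) (hΦinc : AlmostIncreasing Φ)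
    (ε : ℝ) (hε : 0 < ε) :
    ∃ C > (0 : ℝ), ∀ t x : ℝ, 1 ≤ t → 0 ≤ x →
      x ^ q * Φ t ≤ C * (t ^ ε + x ^ q * Φ x) := by
  obtain ⟨hpos, -, C, hC, hCC⟩ := hΦ
  obtain ⟨A, hA, hinc⟩ := hΦinc
  have hC0 : 0 < C := by linarith
  have h : ∀ x : ℝ, 0 ≤ x → Φ (x ^ 2) ≤ C * Φ x := by
    intro x hx
    have := (hCC x hx).1
    rwa [inv_mul_le_iff₀ hC0] at this
  obtain ⟨K, hK, hgrow⟩ := aux_growth Φ hpos C A hC hA h hinc (ε / 2) (by positivity)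
  have hδ : 0 < ε / (2 * q) := by positivity
  obtain ⟨n, hn⟩ := exists_pow_lt_of_lt_one hδ (by norm_num : (1 / 2 : ℝ) < 1)
  refine ⟨C ^ n * A + K, by positivity, ?_⟩
  intro t x ht hx
  have ht0 : 0 ≤ t := by linarith
  have hxq : 0 ≤ x ^ q := Real.rpow_nonneg hx q
  have hte : 0 ≤ t ^ ε := Real.rpow_nonneg ht0 _
  have hxx : 0 ≤ x ^ q * Φ x := mul_nonneg hxq (hpos x hx).le
  have hCA : 0 ≤ C ^ n * A := by positivity
  by_cases hc : t ^ (ε / (2 * q)) ≤ x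
  · have h1 : t ^ ((1 / 2 : ℝ) ^ n) ≤ x :=
      (Real.rpow_le_rpow_of_exponent_le ht hn.le).trans hc
    have h2 := hinc _ x (Real.rpow_nonneg ht0 _) h1
    have h3 : Φ t ≤ C ^ n * A * Φ x := by
      calc Φ t ≤ C ^ n * Φ (t ^ ((1 / 2 : ℝ) ^ n)) := aux_root Φ C hC h n t ht0
        _ ≤ C ^ n * (A * Φ x) := by gcongr
        _ = _ := by ring
    have h4 := mul_le_mul_of_nonneg_left h3 hxq
    nlinarith [mul_nonneg hCA hte, mul_nonneg hK.le hte, mul_nonneg hK.le hxx]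
  · push Not at hc
    have h1 : x ^ q ≤ t ^ (ε / 2) := by
      have := Real.rpow_le_rpow hx hc.le hq.le
      rw [← Real.rpow_mul ht0] at this
      convert this using 2
      field_simp
    have h2 := hgrow t ht
    have h3 : t ^ ε = t ^ (ε / 2) * t ^ (ε / 2) := by
      rw [← Real.rpow_add (by linarith)]
      congr 1
      ring
    have h4 : x ^ q * Φ t ≤ K * t ^ ε := by
      calc x ^ q * Φ t ≤ t ^ (ε / 2) * (K * t ^ (ε / 2)) :=
            mul_le_mul h1 h2 (hpos t ht0).le (Real.rpow_nonneg ht0 _)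
        _ = _ := by rw [h3]; ring
    nlinarith [mul_nonneg hCA hte, mul_nonneg hCA hxx, mul_nonneg hK.le hxx]

theorem almost_increasing_splitting (q : ℝ) (hq : 0 < q)
    (Φ : ℝ → ℝ) (hΦ : InClassL Φ) (hΦinc : AlmostIncreasing Φ)
    (ε : ℝ) (hε : 0 < ε) :
    ∃ C > (0 : ℝ), ∀ μ : Measure ℂ, ∀ f : ℂ → ℂ, Measurable f →
      (∫⁻ z in unitDisk, ENNReal.ofReal (‖f z‖ ^ q * Φ (1 / (1 - ‖z‖))) ∂μ) ≤
        ENNReal.ofReal C *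
          ((∫⁻ z in unitDisk, ENNReal.ofReal ((1 - ‖z‖) ^ (-ε)) ∂μ) +
            ∫⁻ z in unitDisk, ENNReal.ofReal (‖f z‖ ^ q * Φ ‖f z‖) ∂μ) := by
  obtain ⟨C, hC, hpt⟩ := aux_pointwise q hq Φ hΦ hΦinc ε hε
  have hpos := hΦ.1
  refine ⟨C, hC, ?_⟩
  intro μ f hf
  have hm : Measurable fun z : ℂ => ENNReal.ofReal ((1 - ‖z‖) ^ (-ε)) := by fun_prop
  have hD : MeasurableSet unitDisk := measurableSet_lt measurable_norm measurable_const
  rw [← lintegral_add_left hm, ← lintegral_const_mul' _ _ ENNReal.ofReal_ne_top]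
  refine setLIntegral_mono' hD ?_
  intro z hz
  have hz1 : 0 < 1 - ‖z‖ := sub_pos.mpr hz
  have ht : 1 ≤ 1 / (1 - ‖z‖) := by
    rw [le_div_iff₀ hz1]
    linarith [norm_nonneg z]
  have h1 := hpt _ ‖f z‖ ht (norm_nonneg _)
  have h2 : (1 / (1 - ‖z‖)) ^ ε = (1 - ‖z‖) ^ (-ε) := by
    rw [one_div, Real.inv_rpow hz1.le, Real.rpow_neg hz1.le]
  rw [h2] at h1
  rw [← ENNReal.ofReal_add (Real.rpow_nonneg hz1.le _)
    (mul_nonneg (Real.rpow_nonneg (norm_nonneg _) _) (hpos _ (norm_nonneg _)).le),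
    ← ENNReal.ofReal_mul hC.le]
  exact ENNReal.ofReal_le_ofReal h1
end

section
/- Let 0<p<∞, let Ψ belong to the class 𝓛, and let ω be a radial weight in the class D. Then there exists δ₁ > 0, depending only on ω, Ψ and p, such that for every δ ∈ (0,δ₁) and every analytic function f on 𝔻 satisfying |f(z)| ≤ C₀·(1−|z|)^{−δ} for all z ∈ 𝔻 and some constant C₀ > 0, one has ∫_𝔻 |f(z)|^p Ψ(|f(z)|) ω(z) dA(z) < ∞, i.e. f ∈ A^p_{ω,Ψ}. -/
open MeasureTheory Complex Filter

theorem psi_growth (Ψ : ℝ → ℝ) (hΨ : InClassL Ψ) :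
    ∃ B > (0 : ℝ), ∃ a : ℕ, ∀ x : ℝ, 0 ≤ x → Ψ x ≤ B * (1 + x) ^ a := by
  obtain ⟨hpos, hmon, C, hC1, hC⟩ := hΨ
  rcases hmon with ⟨D, hD, h⟩ | ⟨D, hD, h⟩
  · obtain ⟨a, ha⟩ := pow_unbounded_of_one_lt C (by norm_num : (1 : ℝ) < 2)
    set B := D * Ψ 4 with hB
    have hBpos : 0 < B := mul_pos hD (hpos 4 (by norm_num))
    have key : ∀ n : ℕ, ∀ x : ℝ, 2 ≤ x → x ≤ 2 ^ (2 ^ n) → Ψ x ≤ B * x ^ a := by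
      intro n
      have small : ∀ x : ℝ, 2 ≤ x → x ≤ 4 → Ψ x ≤ B * x ^ a := by
        intro x hx hx4
        have h1 := h x 4 (by linarith) hx4
        have h2 : (1 : ℝ) ≤ x ^ a := one_le_pow₀ (by linarith)
        nlinarith
      induction n with
      | zero => intro x hx hx2; exact small x hx (by norm_num at hx2; linarith)
      | succ n ih =>
        intro x hx hxn
        rcases le_or_gt x 4 with h4 | h4
        · exact small x hx h4
        · set y := Real.sqrt x with hy
          have hy0 : 0 ≤ y := Real.sqrt_nonneg x
          have hyx : y ^ 2 = x := Real.sq_sqrt (by linarith)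
          have hy2 : 2 ≤ y := by nlinarith
          have hyn : y ≤ 2 ^ (2 ^ n) := by
            apply le_of_sq_le_sq _ (by positivity)
            rw [hyx, ← pow_mul, ← pow_succ]; exact hxn
          have h1 := ih y hy2 hyn
          have h2 := (hC y hy0).1
          rw [hyx] at h2
          have h3 : Ψ x ≤ C * Ψ y := by
            rwa [inv_mul_le_iff₀ (by linarith)] at h2
          have h4 : C ≤ y ^ a := ha.le.trans (pow_le_pow_left₀ (by norm_num) hy2 a)
          have h5 : x ^ a = y ^ a * y ^ a := by rw [← hyx, ← pow_mul, mul_comm 2 a, pow_mul, sq]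
          have h6 : 0 ≤ y ^ a := by positivity
          calc Ψ x ≤ C * Ψ y := h3
            _ ≤ y ^ a * (B * y ^ a) := mul_le_mul h4 h1 (hpos y hy0).le h6
            _ = B * x ^ a := by rw [h5]; ring
    refine ⟨B, hBpos, a, fun x hx => ?_⟩
    rcases le_or_gt 2 x with h2 | h2
    · obtain ⟨n, hn⟩ := pow_unbounded_of_one_lt x (by norm_num : (1 : ℝ) < 2)
      have h3 : (2 : ℝ) ^ n ≤ 2 ^ (2 ^ n) :=
        pow_le_pow_right₀ (by norm_num) (Nat.lt_two_pow_self).le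
      refine (key n x h2 (hn.le.trans h3)).trans ?_
      gcongr
      linarith
    · have h1 := h x 4 hx (by linarith)
      have h2 : (1 : ℝ) ≤ (1 + x) ^ a := one_le_pow₀ (by linarith)
      nlinarith
  · exact ⟨D * Ψ 0, mul_pos hD (hpos 0 le_rfl), 0, fun x hx => by
      simpa using h 0 x le_rfl hx⟩

theorem tail_decay (ω : ℂ → ℝ) (C K : ℝ) (hC : 1 < C) (hK : 1 < K)
    (h : ∀ r : ℝ, 0 ≤ r → r < 1 → omHat ω r ≥ C * omHat ω (1 - (1 - r) / K)) (n : ℕ) :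
    omHat ω (1 - K⁻¹ ^ n) ≤ omHat ω 0 * C⁻¹ ^ n := by
  induction n with
  | zero => simp
  | succ n ih =>
    have h0 : 0 < K⁻¹ ^ n := by positivity
    have h1 : K⁻¹ ^ n ≤ 1 := pow_le_one₀ (by positivity) (inv_le_one_of_one_le₀ hK.le)
    have h2 := h (1 - K⁻¹ ^ n) (by linarith) (by linarith)
    have h3 : 1 - (1 - (1 - K⁻¹ ^ n)) / K = 1 - K⁻¹ ^ (n + 1) := by
      rw [pow_succ, div_eq_mul_inv]; ring
    rw [h3] at h2
    have h4 : omHat ω (1 - K⁻¹ ^ (n + 1)) ≤ C⁻¹ * omHat ω (1 - K⁻¹ ^ n) := by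
      rw [le_inv_mul_iff₀ (by linarith)]; exact h2
    calc _ ≤ _ := h4
      _ ≤ C⁻¹ * (omHat ω 0 * C⁻¹ ^ n) := by gcongr
      _ = _ := by rw [pow_succ]; ring

theorem oneD (ω : ℂ → ℝ) (hn : ∀ z ∈ unitDisk, 0 ≤ ω z) (hpos : OmHatPos ω)
    (C K ε : ℝ) (hC : 1 < C) (hK : 1 < K) (hε : 0 < ε) (hKε : K ^ ε < C)
    (h : ∀ r : ℝ, 0 ≤ r → r < 1 → omHat ω r ≥ C * omHat ω (1 - (1 - r) / K)) :
    ∫⁻ s in Set.Ioo (0:ℝ) 1, ENNReal.ofReal ((1 - s) ^ (-ε) * ω (s : ℂ)) < ⊤ := by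
  have hint : IntegrableOn (fun s : ℝ => ω (s : ℂ)) (Set.Ioo 0 1) := by
    by_contra hcon
    have := hpos 0 le_rfl one_pos
    rw [omHat, integral_undef hcon] at this
    exact lt_irrefl _ this
  have hK0 : 0 < K := by linarith
  have hnn : ∀ s : ℝ, 0 ≤ s → s < 1 → 0 ≤ ω (s : ℂ) := fun s h0 h1 => hn _ (by
    simp [unitDisk, abs_of_nonneg h0, h1])
  set S : ℕ → Set ℝ := fun n => Set.Ico (1 - K⁻¹ ^ n) (1 - K⁻¹ ^ (n + 1)) with hS
  have hsub : Set.Ioo (0:ℝ) 1 ⊆ ⋃ n, S n := by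
    intro s hs
    obtain ⟨n, h1, h2⟩ := exists_nat_pow_near_of_lt_one (x := 1 - s) (y := K⁻¹)
      (by linarith [hs.2]) (by linarith [hs.1]) (by positivity) (inv_lt_one_of_one_lt₀ hK)
    exact Set.mem_iUnion.2 ⟨n, by constructor <;> linarith⟩
  have hpiece : ∀ n, ∫⁻ s in S n, ENNReal.ofReal ((1 - s) ^ (-ε) * ω (s : ℂ)) ≤
      ENNReal.ofReal ((K ^ ε * omHat ω 0) * (K ^ ε * C⁻¹) ^ n) := by
    intro n
    have h0 : 0 < K⁻¹ ^ n := by positivity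
    have h0' : 0 < K⁻¹ ^ (n + 1) := by positivity
    have h1 : K⁻¹ ^ n ≤ 1 := pow_le_one₀ (by positivity) (inv_le_one_of_one_le₀ hK.le)
    have hi : IntegrableOn (fun s : ℝ => ω (s : ℂ)) (Set.Ioo (1 - K⁻¹ ^ n) 1) :=
      hint.mono_set (Set.Ioo_subset_Ioo_left (by linarith))
    have hM : ∀ s ∈ S n, (1 - s) ^ (-ε) ≤ (K ^ ε) ^ (n + 1) := by
      intro s hs
      have : K⁻¹ ^ (n + 1) ≤ 1 - s := by linarith [hs.2]
      calc (1 - s) ^ (-ε) ≤ (K⁻¹ ^ (n + 1)) ^ (-ε) :=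
            Real.rpow_le_rpow_of_nonpos h0' this (by linarith)
        _ = (K ^ ε) ^ (n + 1) := by
            rw [← Real.rpow_natCast, ← Real.rpow_natCast, ← Real.rpow_mul (by positivity),
              ← Real.rpow_mul (by positivity), Real.inv_rpow hK0.le, ← Real.rpow_neg hK0.le]
            congr 1; ring
    have hKe : 0 < K ^ ε := Real.rpow_pos_of_pos hK0 ε
    calc ∫⁻ s in S n, ENNReal.ofReal ((1 - s) ^ (-ε) * ω (s : ℂ))
        ≤ ∫⁻ s in S n, ENNReal.ofReal ((K ^ ε) ^ (n + 1)) * ENNReal.ofReal (ω (s : ℂ)) := by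
          refine setLIntegral_mono' measurableSet_Ico fun s hs => ?_
          rw [← ENNReal.ofReal_mul (by positivity)]
          refine ENNReal.ofReal_le_ofReal (mul_le_mul_of_nonneg_right (hM s hs) ?_)
          exact hnn s (by linarith [hs.1]) (by linarith [hs.2])
      _ = ENNReal.ofReal ((K ^ ε) ^ (n + 1)) * ∫⁻ s in S n, ENNReal.ofReal (ω (s : ℂ)) :=
          lintegral_const_mul' _ _ ENNReal.ofReal_ne_top
      _ ≤ ENNReal.ofReal ((K ^ ε) ^ (n + 1)) *
            ∫⁻ s in Set.Ioo (1 - K⁻¹ ^ n) 1, ENNReal.ofReal (ω (s : ℂ)) := by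
          refine mul_le_mul_right ?_ _
          rw [setLIntegral_congr (Ioo_ae_eq_Ico (a := 1 - K⁻¹ ^ n) (b := (1:ℝ)))]
          exact lintegral_mono_set (Set.Ico_subset_Ico_right (by linarith))
      _ = ENNReal.ofReal ((K ^ ε) ^ (n + 1)) * ENNReal.ofReal (omHat ω (1 - K⁻¹ ^ n)) := by
          rw [omHat, ofReal_integral_eq_lintegral_ofReal hi]
          filter_upwards [ae_restrict_mem measurableSet_Ioo] with s hs
          exact hnn s (by linarith [hs.1]) hs.2
      _ ≤ _ := by
          rw [← ENNReal.ofReal_mul (by positivity)]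
          refine ENNReal.ofReal_le_ofReal ?_
          calc _ ≤ (K ^ ε) ^ (n + 1) * (omHat ω 0 * C⁻¹ ^ n) := by
                gcongr; exact tail_decay ω C K hC hK h n
            _ = _ := by rw [mul_pow, pow_succ]; ring
  have hKe : 0 < K ^ ε := Real.rpow_pos_of_pos hK0 ε
  have hsum : Summable fun n : ℕ => (K ^ ε * omHat ω 0) * (K ^ ε * C⁻¹) ^ n := by
    apply Summable.mul_left
    apply summable_geometric_of_lt_one (by positivity)
    rw [← div_eq_mul_inv, div_lt_one (by linarith)]; exact hKε
  calc _ ≤ ∫⁻ s in ⋃ n, S n, ENNReal.ofReal ((1 - s) ^ (-ε) * ω (s : ℂ)) :=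
        lintegral_mono_set hsub
    _ ≤ ∑' n, ∫⁻ s in S n, ENNReal.ofReal ((1 - s) ^ (-ε) * ω (s : ℂ)) := lintegral_iUnion_le _ _
    _ ≤ ∑' n, ENNReal.ofReal ((K ^ ε * omHat ω 0) * (K ^ ε * C⁻¹) ^ n) :=
        ENNReal.tsum_le_tsum hpiece
    _ < ⊤ := hsum.tsum_ofReal_lt_top

theorem twoD (g : ℝ → ENNReal) (hg : ∫⁻ s in Set.Ioo (0:ℝ) 1, g s < ⊤) :
    ∫⁻ z in unitDisk, g ‖z‖ < ⊤ := by
  have hm : MeasurableSet unitDisk := (isOpen_lt continuous_norm continuous_const).measurableSet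
  rw [← lintegral_indicator hm, ← Complex.lintegral_comp_polarCoord_symm,
    show _root_.polarCoord.target = Set.Ioi (0 : ℝ) ×ˢ Set.Ioo (-Real.pi) Real.pi from rfl,
    Measure.volume_eq_prod, ← Measure.prod_restrict]
  refine (lintegral_prod_le _).trans_lt ?_
  have : ∀ r ∈ Set.Ioi (0:ℝ), (∫⁻ θ in Set.Ioo (-Real.pi) Real.pi, ENNReal.ofReal (r, θ).1 •
      unitDisk.indicator (fun z => g ‖z‖) (Complex.polarCoord.symm (r, θ))) ≤
      (Set.Ioo (0:ℝ) 1).indicator g r * ENNReal.ofReal (2 * Real.pi) := by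
    intro r hr
    have hr0 : 0 < r := hr
    have hvol : volume (Set.Ioo (-Real.pi) Real.pi) = ENNReal.ofReal (2 * Real.pi) := by
      rw [Real.volume_Ioo]; congr 1; ring
    rw [← hvol, ← setLIntegral_const]
    refine lintegral_mono fun θ => ?_
    have hnorm : ‖Complex.polarCoord.symm (r, θ)‖ = r := by
      rw [Complex.norm_polarCoord_symm, abs_of_pos hr0]
    by_cases h1 : r < 1
    · rw [Set.indicator_of_mem (by simpa [unitDisk, abs_of_pos hr0] using h1),
        Set.indicator_of_mem (show r ∈ Set.Ioo (0:ℝ) 1 from ⟨hr0, h1⟩), hnorm, smul_eq_mul]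
      exact mul_le_of_le_one_left (zero_le) (by simpa using h1.le)
    · rw [Set.indicator_of_notMem (by simpa [unitDisk, abs_of_pos hr0] using h1)]
      simp
  refine (setLIntegral_mono' measurableSet_Ioi this).trans_lt ?_
  rw [lintegral_mul_const' _ _ ENNReal.ofReal_ne_top]
  refine ENNReal.mul_lt_top ?_ ENNReal.ofReal_lt_top
  refine (setLIntegral_le_lintegral _ _).trans_lt ?_
  rwa [lintegral_indicator measurableSet_Ioo]

theorem slow_growth_in_bergman_zygmund (p : ℝ) (hp : 0 < p)
    (Ψ : ℝ → ℝ) (hΨ : InClassL Ψ)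
    (ω : ℂ → ℝ) (hw : IsWeight ω) (hrad : IsRadial ω) (hpos : OmHatPos ω)
    (hD : DoublingD ω) :
    ∃ δ₁ > (0 : ℝ), ∀ δ : ℝ, 0 < δ → δ < δ₁ →
      ∀ f : ℂ → ℂ, AnalyticOnNhd ℂ f unitDisk →
      ∀ C₀ > (0 : ℝ), (∀ z ∈ unitDisk, ‖f z‖ ≤ C₀ * (1 - ‖z‖) ^ (-δ)) →
      (∫⁻ z in unitDisk, ENNReal.ofReal (‖f z‖ ^ p * Ψ ‖f z‖ * ω z) ∂areaM) < ⊤ := by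
  obtain ⟨B, hB, a, hBa⟩ := psi_growth Ψ hΨ
  obtain ⟨-, C, hC, K, hK, hCK⟩ := hD
  have hq : 0 < p + a := by positivity
  have hlC := Real.log_pos hC
  have hlK := Real.log_pos hK
  refine ⟨Real.log C / (Real.log K * (p + a)), by positivity, ?_⟩
  intro δ hδ hδ1 f _ C₀ hC₀ hf
  have hK0 : 0 < K := by linarith
  have hm : MeasurableSet unitDisk := (isOpen_lt continuous_norm continuous_const).measurableSet
  set ε := δ * (p + a) with hε
  have hKε : K ^ ε < C := by
    rw [Real.rpow_def_of_pos hK0, ← Real.lt_log_iff_exp_lt (by linarith)]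
    rw [lt_div_iff₀ (by positivity)] at hδ1
    calc _ = δ * (Real.log K * (p + a)) := by rw [hε]; ring
      _ < _ := hδ1
  have h2 := twoD _ (oneD ω hw.1 hpos C K ε hC hK (by positivity) hKε hCK)
  rw [areaM, Measure.restrict_smul, lintegral_smul_measure, smul_eq_mul]
  refine ENNReal.mul_lt_top (by simp [Real.pi_pos]) ?_
  have hle : ∀ z ∈ unitDisk, ENNReal.ofReal (‖f z‖ ^ p * Ψ ‖f z‖ * ω z) ≤
      ENNReal.ofReal (B * (1 + C₀) ^ (p + a)) *
        ENNReal.ofReal ((1 - ‖z‖) ^ (-ε) * ω ((‖z‖ : ℝ) : ℂ)) := by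
    intro z hz
    have hz1 : ‖z‖ < 1 := hz
    rw [← ENNReal.ofReal_mul (by positivity)]
    refine ENNReal.ofReal_le_ofReal ?_
    rw [hrad ((‖z‖ : ℝ) : ℂ) z (by simp), ← mul_assoc]
    refine mul_le_mul_of_nonneg_right ?_ (hw.1 z hz)
    set t := 1 - ‖z‖ with ht
    have ht0 : 0 < t := by linarith
    have ht1 : t ≤ 1 := by linarith [norm_nonneg z]
    have htd : 1 ≤ t ^ (-δ) := Real.one_le_rpow_of_pos_of_le_one_of_nonpos ht0 ht1 (by linarith)
    have hfz : 1 + ‖f z‖ ≤ (1 + C₀) * t ^ (-δ) := by linarith [hf z hz]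
    calc ‖f z‖ ^ p * Ψ ‖f z‖ ≤ (1 + ‖f z‖) ^ p * (B * (1 + ‖f z‖) ^ a) := by
          refine mul_le_mul ?_ (hBa _ (norm_nonneg _)) (hΨ.1 _ (norm_nonneg _)).le (by positivity)
          exact Real.rpow_le_rpow (norm_nonneg _) (by linarith) hp.le
      _ = B * (1 + ‖f z‖) ^ (p + a) := by
          rw [Real.rpow_add (by positivity), Real.rpow_natCast]; ring
      _ ≤ B * ((1 + C₀) * t ^ (-δ)) ^ (p + a) := by
          refine mul_le_mul_of_nonneg_left ?_ hB.le
          exact Real.rpow_le_rpow (by positivity) hfz hq.le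
      _ = _ := by
          rw [Real.mul_rpow (by positivity) (by positivity), ← Real.rpow_mul ht0.le, hε]
          rw [neg_mul, mul_assoc]
  refine (setLIntegral_mono' hm hle).trans_lt ?_
  rw [lintegral_const_mul' _ _ ENNReal.ofReal_ne_top]
  exact ENNReal.mul_lt_top ENNReal.ofReal_lt_top h2
end

section
/- Let ω be a radial weight on 𝔻. Then ω ∈ D̂ if and only if there exist constants C > 0 and β₀ > 0 such that for every β ≥ β₀ one has ω̂(r) ≤ C·((1−r)/(1−t))^β·ω̂(t) for all 0 ≤ r ≤ t < 1. -/
open MeasureTheory Complex Filter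

theorem omHat_integrable {ω : ℂ → ℝ} (hpos : OmHatPos ω) :
    IntegrableOn (fun s : ℝ => ω (s : ℂ)) (Set.Ioo 0 1) := by
  by_contra h
  have h0 := hpos 0 le_rfl one_pos
  have h1 : omHat ω 0 = 0 := integral_undef h
  linarith

theorem omHat_anti {ω : ℂ → ℝ} (hw : IsWeight ω) (hpos : OmHatPos ω) {r t : ℝ}
    (hr : 0 ≤ r) (hrt : r ≤ t) : omHat ω t ≤ omHat ω r := by
  unfold omHat
  apply setIntegral_mono_set
  · exact (omHat_integrable hpos).mono_set (Set.Ioo_subset_Ioo_left hr)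
  · refine (ae_restrict_iff' measurableSet_Ioo).2 (Eventually.of_forall fun s hs => ?_)
    apply hw.1
    have h0 : 0 < s := lt_of_le_of_lt hr hs.1
    simp only [unitDisk, Set.mem_setOf_eq, Complex.norm_real, Real.norm_eq_abs, abs_of_pos h0]
    exact hs.2
  · exact (Set.Ioo_subset_Ioo_left hrt).eventuallyLE

theorem omHat_iter {ω : ℂ → ℝ} (hw : IsWeight ω) (hpos : OmHatPos ω) {C β : ℝ} (hC : 1 < C)
    (hD : ∀ r : ℝ, 0 ≤ r → r < 1 → omHat ω r ≤ C * omHat ω ((1 + r) / 2))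
    (hβ : 0 ≤ β) (hCβ : C ≤ (2 : ℝ) ^ β) (n : ℕ) :
    ∀ r t : ℝ, 0 ≤ r → r ≤ t → t < 1 → (1 - r) / (1 - t) ≤ 2 ^ (n + 1) →
      omHat ω r ≤ C * ((1 - r) / (1 - t)) ^ β * omHat ω t := by
  have small : ∀ r t : ℝ, 0 ≤ r → r ≤ t → t < 1 → (1 - r) / (1 - t) ≤ 2 →
      omHat ω r ≤ C * ((1 - r) / (1 - t)) ^ β * omHat ω t := by
    intro r t hr hrt ht hx
    have ht' : 0 < 1 - t := by linarith
    have hx1 : 1 ≤ (1 - r) / (1 - t) := by rw [le_div_iff₀ ht']; linarith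
    rw [div_le_iff₀ ht'] at hx
    have h1 := hD r hr (by linarith)
    have h2 : omHat ω ((1 + r) / 2) ≤ omHat ω t := omHat_anti hw hpos (by linarith) (by linarith)
    have h3 : 1 ≤ ((1 - r) / (1 - t)) ^ β := Real.one_le_rpow hx1 hβ
    have h4 := hpos t (by linarith) ht
    calc omHat ω r ≤ C * omHat ω ((1 + r) / 2) := h1
      _ ≤ C * omHat ω t := by gcongr
      _ = C * 1 * omHat ω t := by ring
      _ ≤ _ := by gcongr
  induction n with
  | zero => simpa using small
  | succ n ih =>
    intro r t hr hrt ht hx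
    by_cases hs : (1 - r) / (1 - t) ≤ 2
    · exact small r t hr hrt ht hs
    have ht' : 0 < 1 - t := by linarith
    push Not at hs
    rw [lt_div_iff₀ ht'] at hs
    have e : (1 - (1 + r) / 2) / (1 - t) = (1 - r) / (1 - t) / 2 := by ring
    have h1 := hD r hr (by linarith)
    have h2 := ih ((1 + r) / 2) t (by linarith) (by linarith) ht (by
      rw [e, div_le_iff₀ two_pos]; rw [pow_succ] at hx; exact hx)
    rw [e, Real.div_rpow (div_nonneg (by linarith) ht'.le) two_pos.le] at h2
    have h4 := hpos t (by linarith) ht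
    have h5 : 0 ≤ ((1 - r) / (1 - t)) ^ β :=
      Real.rpow_nonneg (div_nonneg (by linarith) ht'.le) _
    have h6 : 0 < (2 : ℝ) ^ β := by positivity
    have h7 : C / (2 : ℝ) ^ β ≤ 1 := (div_le_one h6).2 hCβ
    calc omHat ω r ≤ C * omHat ω ((1 + r) / 2) := h1
      _ ≤ C * (C * (((1 - r) / (1 - t)) ^ β / 2 ^ β) * omHat ω t) := by gcongr
      _ = (C / 2 ^ β) * (C * ((1 - r) / (1 - t)) ^ β * omHat ω t) := by ring
      _ ≤ 1 * (C * ((1 - r) / (1 - t)) ^ β * omHat ω t) := by gcongr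
      _ = _ := one_mul _

theorem Dhat_characterization (ω : ℂ → ℝ)
    (hw : IsWeight ω) (hrad : IsRadial ω) (hpos : OmHatPos ω) :
    Dhat ω ↔ ∃ C > (0 : ℝ), ∃ β₀ > (0 : ℝ), ∀ β : ℝ, β₀ ≤ β →
      ∀ r t : ℝ, 0 ≤ r → r ≤ t → t < 1 →
        omHat ω r ≤ C * ((1 - r) / (1 - t)) ^ β * omHat ω t := by
  constructor
  · rintro ⟨C, hC, hD⟩
    refine ⟨C, by linarith, Real.logb 2 C, Real.logb_pos one_lt_two hC, ?_⟩
    intro β hβ r t hr hrt ht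
    have hβ0 : 0 ≤ β := (Real.logb_pos one_lt_two hC).le.trans hβ
    have hCβ : C ≤ (2 : ℝ) ^ β := (Real.logb_le_iff_le_rpow one_lt_two (by linarith)).1 hβ
    obtain ⟨n, hn⟩ := pow_unbounded_of_one_lt ((1 - r) / (1 - t)) (one_lt_two (α := ℝ))
    exact omHat_iter hw hpos hC hD hβ0 hCβ n r t hr hrt ht
      (hn.le.trans (pow_le_pow_right₀ one_le_two (Nat.le_succ n)))
  · rintro ⟨C, hC, β, hβ, h⟩
    refine ⟨max 2 (C * 2 ^ β), lt_of_lt_of_le one_lt_two (le_max_left _ _), ?_⟩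
    intro r hr hr1
    have h1 := h β le_rfl r ((1 + r) / 2) hr (by linarith) (by linarith)
    have e : (1 - r) / (1 - (1 + r) / 2) = 2 := by
      rw [div_eq_iff (by linarith)]; ring
    rw [e] at h1
    have h4 := hpos ((1 + r) / 2) (by linarith) (by linarith)
    exact h1.trans (mul_le_mul_of_nonneg_right (le_max_right _ _) h4.le)
end

section
/- Let ω be a radial weight on 𝔻. Then ω ∈ Ď if and only if there exist constants C > 0 and α > 0 such that ω̂(t) ≤ C·((1−t)/(1−r))^α·ω̂(r) for all 0 ≤ r ≤ t < 1. -/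
open MeasureTheory Complex Filter

theorem omHat_anti_aux (ω : ℂ → ℝ) (hw : IsWeight ω) (hpos : OmHatPos ω) {r t : ℝ}
    (hr : 0 ≤ r) (hrt : r ≤ t) : omHat ω t ≤ omHat ω r := by
  have hint : IntegrableOn (fun s : ℝ => ω (s : ℂ)) (Set.Ioo 0 1) := by
    by_contra h
    have h0 := hpos 0 le_rfl one_pos
    unfold omHat at h0
    rw [integral_undef h] at h0
    exact lt_irrefl _ h0
  unfold omHat
  apply setIntegral_mono_set (hint.mono_set (Set.Ioo_subset_Ioo_left hr))
  · filter_upwards [ae_restrict_mem measurableSet_Ioo] with s hs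
    apply hw.1
    have : |s| < 1 := abs_lt.2 ⟨by linarith [hs.1], hs.2⟩
    simpa [unitDisk] using this
  · exact (Set.Ioo_subset_Ioo_left hrt).eventuallyLE

theorem omHat_iter_aux (ω : ℂ → ℝ) {C K : ℝ} (hC : 1 < C) (hK : 1 < K)
    (h : ∀ r : ℝ, 0 ≤ r → r < 1 → omHat ω r ≥ C * omHat ω (1 - (1 - r) / K))
    {r : ℝ} (hr : 0 ≤ r) (hr1 : r < 1) (n : ℕ) :
    C ^ n * omHat ω (1 - (1 - r) / K ^ n) ≤ omHat ω r := by
  induction n with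
  | zero => simp
  | succ n ih =>
    have hKn : 1 ≤ K ^ n := one_le_pow₀ hK.le
    have hle : (1 - r) / K ^ n ≤ 1 - r := div_le_self (by linarith) hKn
    have hp : 0 < (1 - r) / K ^ n := div_pos (by linarith) (by linarith)
    have h1 := h (1 - (1 - r) / K ^ n) (by linarith) (by linarith)
    have e : 1 - (1 - (1 - (1 - r) / K ^ n)) / K = 1 - (1 - r) / K ^ (n + 1) := by
      rw [pow_succ, ← div_div]; ring
    rw [e] at h1
    calc C ^ (n + 1) * omHat ω (1 - (1 - r) / K ^ (n + 1))
        = C ^ n * (C * omHat ω (1 - (1 - r) / K ^ (n + 1))) := by ring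
      _ ≤ C ^ n * omHat ω (1 - (1 - r) / K ^ n) :=
          mul_le_mul_of_nonneg_left h1 (by positivity)
      _ ≤ _ := ih

theorem Dcheck_characterization (ω : ℂ → ℝ)
    (hw : IsWeight ω) (hrad : IsRadial ω) (hpos : OmHatPos ω) :
    Dcheck ω ↔ ∃ C > (0 : ℝ), ∃ α > (0 : ℝ),
      ∀ r t : ℝ, 0 ≤ r → r ≤ t → t < 1 →
        omHat ω t ≤ C * ((1 - t) / (1 - r)) ^ α * omHat ω r := by
  constructor
  · rintro ⟨C, hC, K, hK, h⟩
    have hC0 : 0 < C := by linarith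
    have hK0 : 0 < K := by linarith
    have hlK : 0 < Real.log K := Real.log_pos hK
    have hα : 0 < Real.log C / Real.log K := div_pos (Real.log_pos hC) hlK
    refine ⟨C, hC0, Real.log C / Real.log K, hα, ?_⟩
    intro r t hr hrt ht
    have ht0 : 0 < 1 - t := by linarith
    have hr0 : 0 < 1 - r := by linarith
    set α := Real.log C / Real.log K with hαd
    have hKα : K ^ α = C := by
      rw [Real.rpow_def_of_pos hK0, hαd, mul_div_cancel₀ _ hlK.ne', Real.exp_log hC0]
    obtain ⟨n, hn1, hn2⟩ := exists_nat_pow_near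
      (show 1 ≤ (1 - r) / (1 - t) by rw [le_div_iff₀ ht0]; linarith) hK
    have hKn : 0 < K ^ n := by positivity
    have hKn1 : 0 < K ^ (n + 1) := by positivity
    have hs : 1 - (1 - r) / K ^ n ≤ t := by
      rw [le_div_iff₀ ht0] at hn1
      have : 1 - t ≤ (1 - r) / K ^ n := by rw [le_div_iff₀ hKn]; linarith
      linarith
    have hs0 : 0 ≤ 1 - (1 - r) / K ^ n := by
      have : (1 - r) / K ^ n ≤ 1 - r := div_le_self hr0.le (one_le_pow₀ hK.le)
      linarith
    have hm := omHat_anti_aux ω hw hpos hs0 hs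
    have hit := omHat_iter_aux ω hC hK h hr (by linarith) n
    have hfr := hpos r hr (by linarith)
    have hx : 1 / K ^ (n + 1) ≤ (1 - t) / (1 - r) := by
      rw [div_lt_iff₀ ht0] at hn2
      rw [div_le_div_iff₀ hKn1 hr0]; linarith
    have hx2 : 1 / C ^ (n + 1) ≤ ((1 - t) / (1 - r)) ^ α := by
      have := Real.rpow_le_rpow (by positivity) hx hα.le
      rwa [Real.div_rpow zero_le_one hKn1.le, Real.one_rpow, ← Real.rpow_natCast K,
        ← Real.rpow_mul hK0.le, mul_comm, Real.rpow_mul hK0.le, hKα, Real.rpow_natCast] at this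
    calc omHat ω t ≤ omHat ω (1 - (1 - r) / K ^ n) := hm
      _ ≤ omHat ω r / C ^ n := by rw [le_div_iff₀ (by positivity)]; linarith
      _ = C * (1 / C ^ (n + 1)) * omHat ω r := by rw [pow_succ]; field_simp
      _ ≤ _ := by gcongr
  · rintro ⟨C, hC, α, hα, h⟩
    have hB : 0 < (2 * C) ^ (1 / α) := by positivity
    refine ⟨2, by norm_num, (2 * C) ^ (1 / α) + 1, by linarith, ?_⟩
    intro r hr hr1
    set K := (2 * C) ^ (1 / α) + 1 with hKd
    have hK1 : 1 < K := by linarith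
    have hr0 : 0 < 1 - r := by linarith
    have hKα : 2 * C ≤ K ^ α := by
      have := Real.rpow_le_rpow hB.le (show (2 * C) ^ (1 / α) ≤ K by linarith) hα.le
      rwa [← Real.rpow_mul (by positivity), one_div_mul_cancel hα.ne', Real.rpow_one] at this
    have hle : (1 - r) / K ≤ 1 - r := div_le_self hr0.le hK1.le
    have hp : 0 < (1 - r) / K := by positivity
    have h1 := h r (1 - (1 - r) / K) hr (by linarith) (by linarith)
    have e : (1 - (1 - (1 - r) / K)) / (1 - r) = 1 / K := by field_simp; ring
    rw [e, Real.div_rpow zero_le_one (by linarith), Real.one_rpow] at h1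
    have hc : C * (1 / K ^ α) ≤ 1 / 2 := by
      rw [mul_one_div, div_le_div_iff₀ (by linarith) two_pos]; linarith
    have := mul_le_mul_of_nonneg_right hc (hpos r hr hr1).le
    linarith
end

section
/- Let Ψ belong to the class 𝓛. Then there exist constants c₁ > 0, C₁ > 0 and c₂, C₂ ∈ ℝ, depending only on Ψ, such that c₁·(log(e+x))^{c₂} ≤ Ψ(x) ≤ C₁·(log(e+x))^{C₂} for all 0 ≤ x < ∞. -/
open MeasureTheory Complex Filter

theorem classL_aux (f : ℝ → ℝ) (hp : ∀ x : ℝ, 0 ≤ x → 0 < f x) (hi : AlmostIncreasing f)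
    (C : ℝ) (hC : 1 ≤ C) (h : ∀ x : ℝ, 0 ≤ x → f (x ^ 2) ≤ C * f x) :
    ∃ c₁ > (0 : ℝ), ∃ C₁ > (0 : ℝ), ∃ c₂ C₂ : ℝ, ∀ x : ℝ, 0 ≤ x →
      c₁ * Real.log (Real.exp 1 + x) ^ c₂ ≤ f x ∧
      f x ≤ C₁ * Real.log (Real.exp 1 + x) ^ C₂ := by
  obtain ⟨D, hD, hm⟩ := hi
  have h0 := hp 0 le_rfl
  have he := hp (Real.exp 1) (Real.exp_pos 1).le
  have hC0 : 0 < C := by linarith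
  have key : ∀ n : ℕ, f (Real.exp (2 ^ n)) ≤ C ^ n * f (Real.exp 1) := by
    intro n
    induction n with
    | zero => simp
    | succ k ih =>
      have h1 := h (Real.exp (2 ^ k)) (Real.exp_pos _).le
      rw [← Real.exp_nat_mul] at h1
      have e1 : ((2 : ℕ) : ℝ) * 2 ^ k = 2 ^ (k + 1) := by push_cast; ring
      rw [e1] at h1
      calc _ ≤ _ := h1
        _ ≤ C * (C ^ k * f (Real.exp 1)) := by gcongr
        _ = _ := by ring
  refine ⟨f 0 / D, by positivity, D * C * f (Real.exp 1), by positivity, 0,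
    Real.log C / Real.log 2, fun x hx => ⟨?_, ?_⟩⟩
  · rw [Real.rpow_zero, mul_one, div_le_iff₀ hD]
    have := hm 0 x le_rfl hx
    linarith
  · set L := Real.log (Real.exp 1 + x) with hL
    have hL1 : 1 ≤ L := by
      rw [hL, Real.le_log_iff_exp_le (by positivity)]
      linarith
    have hxL : x ≤ Real.exp L := by
      rw [hL, Real.exp_log (by positivity)]
      have := Real.exp_pos 1
      linarith
    have hl2 : 0 < Real.log 2 := Real.log_pos (by norm_num)
    have hlL : 0 ≤ Real.log L := Real.log_nonneg hL1
    set n := ⌈Real.log L / Real.log 2⌉₊ with hn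
    have hn1 : Real.log L / Real.log 2 ≤ n := Nat.le_ceil _
    have hn2 : (n : ℝ) < Real.log L / Real.log 2 + 1 := Nat.ceil_lt_add_one (by positivity)
    have hLn : L ≤ 2 ^ n := by
      rw [div_le_iff₀ hl2] at hn1
      rw [← Real.log_le_log_iff (by linarith) (by positivity), Real.log_pow]
      exact hn1
    have hCn : C ^ n ≤ C * L ^ (Real.log C / Real.log 2) := by
      calc C ^ n = C ^ (n : ℝ) := (Real.rpow_natCast C n).symm
        _ ≤ C ^ (Real.log L / Real.log 2 + 1) := Real.rpow_le_rpow_of_exponent_le hC hn2.le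
        _ = C * L ^ (Real.log C / Real.log 2) := by
          rw [Real.rpow_add hC0, Real.rpow_one, mul_comm, Real.rpow_def_of_pos hC0,
            Real.rpow_def_of_pos (show 0 < L by linarith)]
          congr 2
          ring
    calc f x ≤ D * f (Real.exp (2 ^ n)) :=
          hm _ _ hx (hxL.trans (Real.exp_le_exp.2 hLn))
      _ ≤ D * (C ^ n * f (Real.exp 1)) := by gcongr; exact key n
      _ ≤ D * ((C * L ^ (Real.log C / Real.log 2)) * f (Real.exp 1)) := by gcongr
      _ = _ := by ring

theorem classL_log_growth (Ψ : ℝ → ℝ) (hΨ : InClassL Ψ) :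
    ∃ c₁ > (0 : ℝ), ∃ C₁ > (0 : ℝ), ∃ c₂ C₂ : ℝ, ∀ x : ℝ, 0 ≤ x →
      c₁ * Real.log (Real.exp 1 + x) ^ c₂ ≤ Ψ x ∧
      Ψ x ≤ C₁ * Real.log (Real.exp 1 + x) ^ C₂ := by
  obtain ⟨hp, hm, C, hC, h⟩ := hΨ
  have hC0 : 0 < C := by linarith
  rcases hm with hm | ⟨D, hD, hm⟩
  · refine classL_aux Ψ hp hm C hC fun x hx => ?_
    have := (h x hx).1
    rwa [inv_mul_le_iff₀ hC0] at this
  · obtain ⟨a, ha, b, hb, c, d, H⟩ := classL_aux (fun x => (Ψ x)⁻¹)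
      (fun x hx => inv_pos.2 (hp x hx))
      ⟨D, hD, fun x y hx hxy => by
        have h1 := hp x hx
        have h2 := hp y (hx.trans hxy)
        have h3 := hm x y hx hxy
        change (Ψ x)⁻¹ ≤ D * (Ψ y)⁻¹
        rw [← div_eq_mul_inv, le_div_iff₀ h2, inv_mul_le_iff₀ h1]
        linarith⟩ C hC
      (fun x hx => by
        have h1 := hp x hx
        have h2 := hp (x ^ 2) (by positivity)
        have h3 := (h x hx).2
        change (Ψ (x ^ 2))⁻¹ ≤ C * (Ψ x)⁻¹
        rw [← div_eq_mul_inv, le_div_iff₀ h1, inv_mul_le_iff₀ h2]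
        linarith)
    refine ⟨b⁻¹, inv_pos.2 hb, a⁻¹, inv_pos.2 ha, -d, -c, fun x hx => ?_⟩
    obtain ⟨H1, H2⟩ := H x hx
    have h1 := hp x hx
    have hL : 0 < Real.log (Real.exp 1 + x) := by
      apply Real.log_pos
      have := Real.add_one_le_exp 1
      linarith
    have hc := Real.rpow_pos_of_pos hL c
    have hd := Real.rpow_pos_of_pos hL d
    rw [Real.rpow_neg hL.le, Real.rpow_neg hL.le, ← mul_inv, ← mul_inv]
    exact ⟨inv_le_of_inv_le₀ h1 H2, (le_inv_comm₀ (by positivity) h1).1 H1⟩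
end

section
/- Let Ψ belong to the class 𝓛 and let 0 < α < ∞. Then there exists a constant C ≥ 1, depending only on Ψ and α, such that C⁻¹·Ψ(x^α) ≤ Ψ(x) ≤ C·Ψ(x^α) for all 0 ≤ x < ∞. -/
open MeasureTheory Complex Filter

/-- Iterating the squaring comparison. -/
theorem classL_iter (Ψ : ℝ → ℝ) (C : ℝ) (hC : 1 ≤ C)
    (h : ∀ x : ℝ, 0 ≤ x → Ψ (x ^ 2) ≤ C * Ψ x ∧ Ψ x ≤ C * Ψ (x ^ 2)) (n : ℕ) :
    ∀ x : ℝ, 0 ≤ x → Ψ (x ^ (2 ^ n)) ≤ C ^ n * Ψ x ∧ Ψ x ≤ C ^ n * Ψ (x ^ (2 ^ n)) := by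
  have hC0 : 0 ≤ C := by linarith
  induction n with
  | zero => intro x _; simp
  | succ n ih =>
    intro x hx
    obtain ⟨h1, h2⟩ := ih x hx
    obtain ⟨h3, h4⟩ := h (x ^ (2 ^ n)) (by positivity)
    rw [← pow_mul, ← pow_succ] at h3 h4
    constructor
    · calc Ψ (x ^ (2 ^ (n + 1))) ≤ C * Ψ (x ^ (2 ^ n)) := h3
        _ ≤ C * (C ^ n * Ψ x) := by gcongr
        _ = C ^ (n + 1) * Ψ x := by ring
    · calc Ψ x ≤ C ^ n * Ψ (x ^ (2 ^ n)) := h2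
        _ ≤ C ^ n * (C * Ψ (x ^ (2 ^ (n + 1)))) := by gcongr
        _ = C ^ (n + 1) * Ψ (x ^ (2 ^ (n + 1))) := by ring

/-- A value between two comparable values is comparable to both. -/
theorem classL_sandwich (Ψ : ℝ → ℝ) (hpos : ∀ x : ℝ, 0 ≤ x → 0 < Ψ x)
    (hm : AlmostIncreasing Ψ ∨ AlmostDecreasing Ψ) (K : ℝ) (hK : 1 ≤ K) :
    ∃ B : ℝ, 1 ≤ B ∧ ∀ u y v : ℝ, 0 ≤ u → u ≤ y → y ≤ v → Ψ u ≤ K * Ψ v → Ψ v ≤ K * Ψ u →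
      (Ψ y ≤ B * Ψ u ∧ Ψ u ≤ B * Ψ y) ∧ (Ψ y ≤ B * Ψ v ∧ Ψ v ≤ B * Ψ y) := by
  have key : ∀ A : ℝ, 0 < A → ∀ p q r : ℝ, 0 < p → 0 < q → 0 < r → p ≤ A * q → q ≤ A * r →
      p ≤ K * r → r ≤ K * p →
      (q ≤ max A 1 * K * p ∧ p ≤ max A 1 * K * q) ∧
      (q ≤ max A 1 * K * r ∧ r ≤ max A 1 * K * q) := by
    intro A hA p q r hp hq hr h1 h2 h3 h4
    have hM : A ≤ max A 1 := le_max_left _ _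
    generalize max A 1 = M at hM
    have hM0 : 0 < M := by linarith
    have h1' : p ≤ M * q := h1.trans (by gcongr)
    have h2' : q ≤ M * r := h2.trans (by gcongr)
    refine ⟨⟨?_, ?_⟩, ?_, ?_⟩
    · calc q ≤ M * r := h2'
        _ ≤ M * (K * p) := by gcongr
        _ = _ := by ring
    · have : 0 ≤ (K - 1) * (M * q) := mul_nonneg (by linarith) (by positivity)
      linarith
    · have : 0 ≤ (K - 1) * (M * r) := mul_nonneg (by linarith) (by positivity)
      linarith
    · calc r ≤ K * p := h4
        _ ≤ K * (M * q) := by gcongr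
        _ = _ := by ring
  have hB : ∀ A : ℝ, 1 ≤ max A 1 * K := fun A =>
    one_le_mul_of_one_le_of_one_le (le_max_right _ _) hK
  rcases hm with ⟨A, hA, hm⟩ | ⟨A, hA, hm⟩
  · refine ⟨_, hB A, fun u y v hu huy hyv h1 h2 => ?_⟩
    exact key A hA _ _ _ (hpos u hu) (hpos y (by linarith)) (hpos v (by linarith))
      (hm u y hu huy) (hm y v (by linarith) hyv) h1 h2
  · refine ⟨_, hB A, fun u y v hu huy hyv h1 h2 => ?_⟩
    exact (key A hA _ _ _ (hpos v (by linarith)) (hpos y (by linarith)) (hpos u hu)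
      (hm y v (by linarith) hyv) (hm u y hu huy) h2 h1).symm

/-- The case of exponents at least one. -/
theorem classL_ge_one (Ψ : ℝ → ℝ) (hΨ : InClassL Ψ) (α : ℝ) (hα : 1 ≤ α) :
    ∃ B : ℝ, 1 ≤ B ∧ ∀ x : ℝ, 0 ≤ x → Ψ (x ^ α) ≤ B * Ψ x ∧ Ψ x ≤ B * Ψ (x ^ α) := by
  obtain ⟨hpos, hm, C, hC, hsq⟩ := hΨ
  have hC0 : 0 < C := by linarith
  obtain ⟨n, hn⟩ := pow_unbounded_of_one_lt α (one_lt_two)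
  have hit := classL_iter Ψ C hC
    (fun x hx => ⟨(inv_mul_le_iff₀ hC0).1 (hsq x hx).1, (hsq x hx).2⟩) n
  obtain ⟨B, hB, hs⟩ := classL_sandwich Ψ hpos hm (C ^ n) (one_le_pow₀ hC)
  refine ⟨B, hB, fun x hx => ?_⟩
  obtain ⟨h1, h2⟩ := hit x hx
  have e : x ^ (2 ^ n) = x ^ ((2 : ℝ) ^ n) := by
    rw [← Real.rpow_natCast]; norm_num
  rcases le_total 1 x with h | h
  · refine (hs x (x ^ α) (x ^ (2 ^ n)) hx ?_ ?_ h2 h1).1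
    · exact Real.self_le_rpow_of_one_le h hα
    · rw [e]; exact Real.rpow_le_rpow_of_exponent_le h hn.le
  · refine (hs (x ^ (2 ^ n)) (x ^ α) x (by positivity) ?_ ?_ h1 h2).2
    · rw [e]; exact Real.rpow_le_rpow_of_exponent_ge_of_imp hx h hn.le (by intros; linarith)
    · exact Real.rpow_le_self_of_le_one hx h hα

theorem classL_rpow_comparable (Ψ : ℝ → ℝ) (hΨ : InClassL Ψ) (α : ℝ) (hα : 0 < α) :
    ∃ C : ℝ, 1 ≤ C ∧ ∀ x : ℝ, 0 ≤ x →
      C⁻¹ * Ψ (x ^ α) ≤ Ψ x ∧ Ψ x ≤ C * Ψ (x ^ α) := by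
  rcases le_total 1 α with h | h
  · obtain ⟨B, hB, hs⟩ := classL_ge_one Ψ hΨ α h
    exact ⟨B, hB, fun x hx =>
      ⟨(inv_mul_le_iff₀ (by linarith)).2 (hs x hx).1, (hs x hx).2⟩⟩
  · obtain ⟨B, hB, hs⟩ := classL_ge_one Ψ hΨ α⁻¹ ((one_le_inv₀ hα).2 h)
    refine ⟨B, hB, fun x hx => ?_⟩
    have := hs (x ^ α) (by positivity)
    rw [Real.rpow_rpow_inv hx hα.ne'] at this
    exact ⟨(inv_mul_le_iff₀ (by linarith)).2 this.2, this.1⟩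
end

section
/- Let Φ and Ψ belong to the class 𝓛. Then there exists a constant C ≥ 1, depending only on Φ and Ψ, such that C⁻¹·Ψ(x) ≤ Ψ(x/Φ(x)) ≤ C·Ψ(x) for all 0 ≤ x < ∞. -/
open MeasureTheory Complex Filter

lemma le_of_sq_le_sq_aux {a b : ℝ} (h : a ^ 2 ≤ b ^ 2) (hb : 0 ≤ b) : a ≤ b :=
  abs_le_of_sq_le_sq' h hb |>.2

/-- Functions in the class are bounded above and below on bounded intervals. -/
lemma InClassL.bdd {Φ : ℝ → ℝ} (h : InClassL Φ) (T : ℝ) (hT : 0 ≤ T) :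
    ∃ K : ℝ, 1 ≤ K ∧ ∀ x, 0 ≤ x → x ≤ T → Φ x ≤ K ∧ (Φ x)⁻¹ ≤ K := by
  obtain ⟨hpos, hmono, -⟩ := h
  have h0 := hpos 0 le_rfl
  have hT0 := hpos T hT
  have key : ∃ a b : ℝ, 0 < a ∧ ∀ x, 0 ≤ x → x ≤ T → a ≤ Φ x ∧ Φ x ≤ b := by
    rcases hmono with ⟨C, hC, hm⟩ | ⟨C, hC, hm⟩
    · refine ⟨Φ 0 / C, C * Φ T, by positivity, fun x hx hxT => ⟨?_, hm x T hx hxT⟩⟩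
      rw [div_le_iff₀ hC, mul_comm]
      exact hm 0 x le_rfl hx
    · refine ⟨Φ T / C, C * Φ 0, by positivity, fun x hx hxT => ⟨?_, hm 0 x le_rfl hx⟩⟩
      rw [div_le_iff₀ hC, mul_comm]
      exact hm x T hx hxT
  obtain ⟨a, b, ha, hab⟩ := key
  refine ⟨max 1 (max b a⁻¹), le_max_left _ _, fun x hx hxT => ⟨?_, ?_⟩⟩
  · exact (hab x hx hxT).2.trans ((le_max_left _ _).trans (le_max_right _ _))
  · exact (inv_anti₀ ha (hab x hx hxT).1).trans ((le_max_right _ _).trans (le_max_right _ _))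

/-- Square-doubling implies slow growth. -/
lemma slow_growth {f : ℝ → ℝ} (hpos : ∀ x, 0 ≤ x → 0 < f x)
    (hb : ∀ T, 0 ≤ T → ∃ K : ℝ, 1 ≤ K ∧ ∀ x, 0 ≤ x → x ≤ T → f x ≤ K)
    {C : ℝ} (hC : 1 ≤ C) (hsq : ∀ x, 0 ≤ x → f (x ^ 2) ≤ C * f x) :
    ∃ K : ℝ, 1 ≤ K ∧ ∀ x, 1 ≤ x → f x ^ 2 ≤ K * x := by
  set S : ℝ := C ^ 4 + 2 with hS
  have hC4 : 1 ≤ C ^ 4 := one_le_pow₀ hC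
  have hS1 : 1 < S := by linarith
  obtain ⟨K, hK, hKb⟩ := hb S (by linarith)
  have base : ∀ x, 1 ≤ x → x ≤ S → f x ^ 2 ≤ K ^ 2 * x := by
    intro x hx hxS
    have h1 := hKb x (by linarith) hxS
    have h2 := hpos x (by linarith)
    have h3 : f x ^ 2 ≤ K ^ 2 := by gcongr
    nlinarith [sq_nonneg K]
  have main : ∀ n : ℕ, ∀ x, 1 ≤ x → x ≤ S ^ (2 ^ n) → f x ^ 2 ≤ K ^ 2 * x := by
    intro n
    induction n with
    | zero => intro x hx hxS; exact base x hx (by simpa using hxS)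
    | succ n ih =>
      intro x hx hxS
      rcases le_or_gt x S with h | h
      · exact base x hx h
      obtain ⟨y, hy0, rfl⟩ : ∃ y : ℝ, 0 ≤ y ∧ y ^ 2 = x :=
        ⟨√x, Real.sqrt_nonneg _, Real.sq_sqrt (by linarith)⟩
      have hy1 : 1 ≤ y := by nlinarith
      have hyC : C ^ 2 ≤ y := by
        refine le_of_sq_le_sq_aux ?_ hy0
        nlinarith
      have hyS : y ≤ S ^ (2 ^ n) := by
        refine le_of_sq_le_sq_aux ?_ (by positivity)
        rw [← pow_mul, ← pow_succ]
        exact hxS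
      have h1 := ih y hy1 hyS
      have h2 := hsq y hy0
      have h3 := hpos (y ^ 2) (by positivity)
      calc f (y ^ 2) ^ 2 ≤ (C * f y) ^ 2 := by gcongr
        _ = C ^ 2 * f y ^ 2 := by ring
        _ ≤ y * (K ^ 2 * y) := by gcongr
        _ = K ^ 2 * y ^ 2 := by ring
  refine ⟨K ^ 2, one_le_pow₀ hK, fun x hx => ?_⟩
  obtain ⟨n, hn⟩ := pow_unbounded_of_one_lt x hS1
  refine main n x hx (hn.le.trans ?_)
  exact pow_le_pow_right₀ hS1.le (Nat.lt_two_pow_self).le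

/-- Two points comparable on the power scale have comparable values. -/
lemma InClassL.comp {Ψ : ℝ → ℝ} (h : InClassL Ψ) :
    ∃ D : ℝ, 1 ≤ D ∧ ∀ x u, 0 ≤ x → 0 ≤ u → x ≤ u ^ 4 → u ≤ x ^ 2 →
      Ψ x ≤ D * Ψ u ∧ Ψ u ≤ D * Ψ x := by
  obtain ⟨hpos, hmono, C, hC, hsq⟩ := h
  have hup : ∀ x, 0 ≤ x → Ψ (x ^ 2) ≤ C * Ψ x := fun x hx => by
    have := (hsq x hx).1
    rwa [inv_mul_le_iff₀ (by linarith)] at this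
  have hup4 : ∀ x, 0 ≤ x → Ψ (x ^ 4) ≤ C ^ 2 * Ψ x := fun x hx => by
    have h1 := hup (x ^ 2) (by positivity)
    have h2 := hup x hx
    have e : x ^ 4 = (x ^ 2) ^ 2 := by ring
    rw [e]; nlinarith
  have hlo4 : ∀ x, 0 ≤ x → Ψ x ≤ C ^ 2 * Ψ (x ^ 4) := fun x hx => by
    have h1 := (hsq (x ^ 2) (by positivity)).2
    have h2 := (hsq x hx).2
    have e : x ^ 4 = (x ^ 2) ^ 2 := by ring
    rw [e]; nlinarith
  have fin : ∀ A : ℝ, 0 < A → (∀ x u, 0 ≤ x → 0 ≤ u → x ≤ u ^ 4 → u ≤ x ^ 2 →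
      Ψ x ≤ A * C ^ 2 * Ψ u ∧ Ψ u ≤ A * C ^ 2 * Ψ x) → ∃ D : ℝ, 1 ≤ D ∧
      ∀ x u, 0 ≤ x → 0 ≤ u → x ≤ u ^ 4 → u ≤ x ^ 2 → Ψ x ≤ D * Ψ u ∧ Ψ u ≤ D * Ψ x := by
    intro A hA H
    refine ⟨max 1 (A * C ^ 2), le_max_left _ _, fun x u hx hu h1 h2 => ?_⟩
    obtain ⟨a, b⟩ := H x u hx hu h1 h2
    exact ⟨a.trans (mul_le_mul_of_nonneg_right (le_max_right _ _) (hpos u hu).le),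
      b.trans (mul_le_mul_of_nonneg_right (le_max_right _ _) (hpos x hx).le)⟩
  have hCC : C ≤ C ^ 2 := by nlinarith
  rcases hmono with ⟨A, hA, hm⟩ | ⟨A, hA, hm⟩
  · refine fin A hA fun x u hx hu h1 h2 => ⟨?_, ?_⟩
    · calc Ψ x ≤ A * Ψ (u ^ 4) := hm _ _ hx h1
        _ ≤ A * (C ^ 2 * Ψ u) := by gcongr; exact hup4 u hu
        _ = _ := by ring
    · have := hpos x hx
      calc Ψ u ≤ A * Ψ (x ^ 2) := hm _ _ hu h2
        _ ≤ A * (C * Ψ x) := by gcongr; exact hup x hx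
        _ ≤ A * (C ^ 2 * Ψ x) := by gcongr
        _ = _ := by ring
  · refine fin A hA fun x u hx hu h1 h2 => ⟨?_, ?_⟩
    · have := hpos u hu
      calc Ψ x ≤ C * Ψ (x ^ 2) := (hsq x hx).2
        _ ≤ C * (A * Ψ u) := by gcongr; exact hm _ _ hu h2
        _ ≤ C ^ 2 * (A * Ψ u) := by gcongr
        _ = _ := by ring
    · calc Ψ u ≤ C ^ 2 * Ψ (u ^ 4) := hlo4 u hu
        _ ≤ C ^ 2 * (A * Ψ x) := by gcongr; exact hm _ _ hx h1
        _ = _ := by ring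

theorem classL_div_comparable (Φ Ψ : ℝ → ℝ) (hΦ : InClassL Φ) (hΨ : InClassL Ψ) :
    ∃ C : ℝ, 1 ≤ C ∧ ∀ x : ℝ, 0 ≤ x →
      C⁻¹ * Ψ x ≤ Ψ (x / Φ x) ∧ Ψ (x / Φ x) ≤ C * Ψ x := by
  have hpos := hΦ.1
  have hΨpos := hΨ.1
  obtain ⟨C, hC, hsq⟩ := hΦ.2.2
  have hC0 : 0 < C := by linarith
  obtain ⟨K₁, hK₁, hg₁⟩ := slow_growth hpos
    (fun T hT => by
      obtain ⟨K, hK, hb⟩ := hΦ.bdd T hT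
      exact ⟨K, hK, fun x hx hxT => (hb x hx hxT).1⟩) hC
    (fun x hx => by
      have := (hsq x hx).1
      rwa [inv_mul_le_iff₀ hC0] at this)
  obtain ⟨K₂, hK₂, hg₂⟩ := slow_growth (f := fun x => (Φ x)⁻¹)
    (fun x hx => inv_pos.2 (hpos x hx))
    (fun T hT => by
      obtain ⟨K, hK, hb⟩ := hΦ.bdd T hT
      exact ⟨K, hK, fun x hx hxT => (hb x hx hxT).2⟩) hC
    (fun x hx => by
      have h1 := (hsq x hx).2
      have h2 := hpos x hx
      have h3 := hpos (x ^ 2) (by positivity)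
      show (Φ (x ^ 2))⁻¹ ≤ C * (Φ x)⁻¹
      rw [← div_eq_mul_inv, le_div_iff₀ h2, inv_mul_le_iff₀ h3, mul_comm]
      exact h1)
  obtain ⟨D, hD, hcomp⟩ := hΨ.comp
  set T : ℝ := K₁ ^ 2 + K₂ with hT
  have hT0 : 0 ≤ T := by positivity
  obtain ⟨L, hL, hLb⟩ := hΦ.bdd T hT0
  obtain ⟨M, hM, hMb⟩ := hΨ.bdd (T * L) (by positivity)
  have hM0 : 0 < M := by linarith
  have key : ∀ x, 0 ≤ x → Ψ x ≤ (D + M ^ 2) * Ψ (x / Φ x) ∧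
      Ψ (x / Φ x) ≤ (D + M ^ 2) * Ψ x := by
    intro x hx
    have hp := hpos x hx
    have hu : 0 ≤ x / Φ x := by positivity
    have q1 := hΨpos x hx
    have q2 := hΨpos _ hu
    rcases le_or_gt x T with h | h
    · have hl : x / Φ x ≤ T * L := by
        rw [div_eq_mul_inv]
        have := (hLb x hx h).2
        gcongr
      have hxl : x ≤ T * L := by nlinarith
      have gen : ∀ a b, 0 ≤ a → a ≤ T * L → 0 ≤ b → b ≤ T * L →
          Ψ a ≤ (D + M ^ 2) * Ψ b := by
        intro a b ha haT hb hbT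
        have h1 := (hMb a ha haT).1
        have h2 := (hMb b hb hbT).2
        have h3 := hΨpos b hb
        have h4 : 1 ≤ M * Ψ b := by
          have := mul_le_mul_of_nonneg_right h2 h3.le
          rwa [inv_mul_cancel₀ h3.ne'] at this
        calc Ψ a ≤ M * 1 := by linarith
          _ ≤ M * (M * Ψ b) := by gcongr
          _ = M ^ 2 * Ψ b := by ring
          _ ≤ _ := by gcongr; linarith
      exact ⟨gen _ _ hx hxl hu hl, gen _ _ hu hl hx hxl⟩
    · have hx1 : 1 ≤ x := by nlinarith
      have hxK₁ : K₁ ^ 2 ≤ x := by linarith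
      have hxK₂ : K₂ ≤ x := by nlinarith
      have a1 := hg₁ x hx1
      have a2 : ((Φ x)⁻¹) ^ 2 ≤ K₂ * x := hg₂ x hx1
      have b1 : x ≤ (x / Φ x) ^ 4 := by
        rw [div_pow, le_div_iff₀ (by positivity)]
        calc x * Φ x ^ 4 = x * (Φ x ^ 2) ^ 2 := by ring
          _ ≤ x * (K₁ * x) ^ 2 := by gcongr
          _ = x ^ 3 * K₁ ^ 2 := by ring
          _ ≤ x ^ 3 * x := by gcongr
          _ = x ^ 4 := by ring
      have b2 : x / Φ x ≤ x ^ 2 := by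
        refine le_of_sq_le_sq_aux ?_ (by positivity)
        calc (x / Φ x) ^ 2 = x ^ 2 * ((Φ x)⁻¹) ^ 2 := by rw [div_eq_mul_inv]; ring
          _ ≤ x ^ 2 * (K₂ * x) := by gcongr
          _ ≤ x ^ 2 * (x * x) := by gcongr
          _ = (x ^ 2) ^ 2 := by ring
      obtain ⟨c1, c2⟩ := hcomp x _ hx hu b1 b2
      have hDD : D ≤ D + M ^ 2 := by nlinarith
      exact ⟨c1.trans (by gcongr), c2.trans (by gcongr)⟩
  refine ⟨D + M ^ 2, by nlinarith, fun x hx => ⟨?_, (key x hx).2⟩⟩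
  rw [inv_mul_le_iff₀ (by positivity)]
  exact (key x hx).1
end

section
/- Let ω be a radial weight in the class D and let α > 0, and define ω_{[α]}(z) = (1−|z|)^α·ω(z). Then ω_{[α]} is a radial weight in the class D, and moreover there exists a constant C ≥ 1 such that C⁻¹·ω̂(z)·(1−|z|)^α ≤ ω̂_{[α]}(z) ≤ C·ω̂(z)·(1−|z|)^α for all z ∈ 𝔻, where ω̂_{[α]}(z) = ∫_{|z|}^1 (1−s)^α ω(s) ds. -/
open MeasureTheory Complex Filter

/-- Splitting a tail integral. -/
theorem tail_split {f : ℝ → ℝ} {r ρ : ℝ} (h1 : r ≤ ρ) (h2 : ρ < 1)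
    (hf : IntegrableOn f (Set.Ioo r 1)) :
    ∫ s in Set.Ioo r 1, f s = (∫ s in Set.Ioc r ρ, f s) + ∫ s in Set.Ioo ρ 1, f s := by
  rw [← Set.Ioc_union_Ioo_eq_Ioo h1 h2]
  apply setIntegral_union
  · rw [Set.disjoint_left]
    intro x hx hy
    exact absurd hx.2 (not_le.mpr hy.1)
  · exact measurableSet_Ioo
  · exact hf.mono_set (fun x hx => ⟨hx.1, lt_of_le_of_lt hx.2 h2⟩)
  · exact hf.mono_set (fun x hx => ⟨lt_of_le_of_lt h1 hx.1, hx.2⟩)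

theorem shifted_weight_doubling (ω : ℂ → ℝ)
    (hw : IsWeight ω) (hrad : IsRadial ω) (hpos : OmHatPos ω) (hD : DoublingD ω)
    (α : ℝ) (hα : 0 < α) :
    IsRadial (fun w => (1 - ‖w‖) ^ α * ω w) ∧
    IsWeight (fun w => (1 - ‖w‖) ^ α * ω w) ∧
    DoublingD (fun w => (1 - ‖w‖) ^ α * ω w) ∧
    ∃ C : ℝ, 1 ≤ C ∧ ∀ z ∈ unitDisk,
      C⁻¹ * (omHat ω ‖z‖ * (1 - ‖z‖) ^ α) ≤ omHat (fun w => (1 - ‖w‖) ^ α * ω w) ‖z‖ ∧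
      omHat (fun w => (1 - ‖w‖) ^ α * ω w) ‖z‖ ≤ C * (omHat ω ‖z‖ * (1 - ‖z‖) ^ α) := by
  obtain ⟨hnn, hint⟩ := hw
  obtain ⟨⟨C₁, hC₁, hhat⟩, C, hC, K, hK, hcheck⟩ := hD
  have hcont : Continuous (fun w : ℂ => (1 - ‖w‖) ^ α) :=
    (continuous_const.sub continuous_norm).rpow_const (fun _ => Or.inr hα.le)
  have hf0 : ∀ s : ℝ, 0 ≤ s → s < 1 → 0 ≤ ω (s : ℂ) := by
    intro s h0 h1
    apply hnn
    simpa [unitDisk, abs_of_nonneg h0] using h1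
  have hfi : ∀ r : ℝ, 0 ≤ r → r < 1 → IntegrableOn (fun s : ℝ => ω (s : ℂ)) (Set.Ioo r 1) := by
    intro r h0 h1
    by_contra hcon
    have := hpos r h0 h1
    unfold omHat at this
    rw [integral_undef hcon] at this
    exact lt_irrefl _ this
  have hg : ∀ r : ℝ, 0 ≤ r → omHat (fun w => (1 - ‖w‖) ^ α * ω w) r
      = ∫ s in Set.Ioo r 1, (1 - s) ^ α * ω (s : ℂ) := by
    intro r h0
    unfold omHat
    apply setIntegral_congr_fun measurableSet_Ioo
    intro s hs
    have : 0 ≤ s := h0.trans hs.1.le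
    simp [abs_of_nonneg this]
  have hgi : ∀ r : ℝ, 0 ≤ r → r < 1 →
      IntegrableOn (fun s : ℝ => (1 - s) ^ α * ω (s : ℂ)) (Set.Ioo r 1) := by
    intro r h0 h1
    have hc : Continuous (fun s : ℝ => (1 - s) ^ α) :=
      (continuous_const.sub continuous_id).rpow_const (fun _ => Or.inr hα.le)
    refine Integrable.mono (hfi r h0 h1) (hc.aestronglyMeasurable.mul (hfi r h0 h1).1) ?_
    filter_upwards [ae_restrict_mem measurableSet_Ioo] with s hs
    have h3 : 0 ≤ 1 - s := by linarith [hs.2]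
    have h4 : (1 - s) ^ α ≤ 1 := Real.rpow_le_one h3 (by linarith [hs.1]) hα.le
    rw [norm_mul, Real.norm_of_nonneg (Real.rpow_nonneg h3 α)]
    exact mul_le_of_le_one_left (norm_nonneg _) h4
  -- upper bound
  have hup : ∀ r : ℝ, 0 ≤ r → r < 1 →
      omHat (fun w => (1 - ‖w‖) ^ α * ω w) r ≤ (1 - r) ^ α * omHat ω r := by
    intro r h0 h1
    rw [hg r h0]
    unfold omHat
    rw [← integral_const_mul]
    apply setIntegral_mono_on (hgi r h0 h1) ((hfi r h0 h1).const_mul _) measurableSet_Ioo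
    intro s hs
    apply mul_le_mul_of_nonneg_right _ (hf0 s (h0.trans hs.1.le) hs.2)
    exact Real.rpow_le_rpow (by linarith [hs.2]) (by linarith [hs.1]) hα.le
  -- lower bound on pieces
  have hlow : ∀ r ρ : ℝ, 0 ≤ r → r ≤ ρ → ρ < 1 →
      (1 - ρ) ^ α * (omHat ω r - omHat ω ρ) + omHat (fun w => (1 - ‖w‖) ^ α * ω w) ρ
        ≤ omHat (fun w => (1 - ‖w‖) ^ α * ω w) r := by
    intro r ρ h0 h1 h2
    have h3 : r < 1 := lt_of_le_of_lt h1 h2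
    rw [hg r h0, hg ρ (h0.trans h1), tail_split h1 h2 (hgi r h0 h3)]
    unfold omHat
    rw [tail_split h1 h2 (hfi r h0 h3), add_sub_cancel_right, ← integral_const_mul]
    have hsub : Set.Ioc r ρ ⊆ Set.Ioo r 1 := fun x hx => ⟨hx.1, lt_of_le_of_lt hx.2 h2⟩
    gcongr ?_ + _
    apply setIntegral_mono_on (((hfi r h0 h3).mono_set hsub).const_mul _)
      ((hgi r h0 h3).mono_set hsub) measurableSet_Ioc
    intro s hs
    apply mul_le_mul_of_nonneg_right _ (hf0 s (h0.trans hs.1.le) (hsub hs).2)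
    exact Real.rpow_le_rpow (by linarith) (by linarith [hs.2]) hα.le
  have hK0 : 0 < K := by linarith
  have hC0 : 0 < C := by linarith
  have hρ : ∀ r : ℝ, 0 ≤ r → r < 1 → r ≤ 1 - (1 - r) / K ∧ 1 - (1 - r) / K < 1 := by
    intro r h0 h1
    have h2 : 0 < (1 - r) / K := div_pos (by linarith) hK0
    have h3 : (1 - r) / K ≤ 1 - r := div_le_self (by linarith) hK.le
    constructor <;> linarith
  have hgpos : ∀ r : ℝ, 0 ≤ r → r < 1 → 0 ≤ omHat (fun w => (1 - ‖w‖) ^ α * ω w) r := by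
    intro r h0 h1
    rw [hg r h0]
    apply setIntegral_nonneg measurableSet_Ioo
    intro s hs
    exact mul_nonneg (Real.rpow_nonneg (by linarith [hs.2]) α) (hf0 s (h0.trans hs.1.le) hs.2)
  have hKα : 0 < K ^ α := Real.rpow_pos_of_pos hK0 α
  have hKα1 : 1 ≤ K ^ α := Real.one_le_rpow hK.le hα.le
  -- the constant
  obtain ⟨B, hB⟩ : ∃ B : ℝ, B = K ^ α * (C / (C - 1)) := ⟨_, rfl⟩
  have hC1 : 0 < C - 1 := by linarith
  have hB1 : 1 ≤ B := by
    rw [hB]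
    apply one_le_mul_of_one_le_of_one_le hKα1
    rw [le_div_iff₀ hC1]; linarith
  have hlower : ∀ r : ℝ, 0 ≤ r → r < 1 →
      omHat ω r * (1 - r) ^ α ≤ B * omHat (fun w => (1 - ‖w‖) ^ α * ω w) r := by
    intro r h0 h1
    obtain ⟨a1, a2⟩ := hρ r h0 h1
    have b1 := hlow r _ h0 a1 a2
    have b2 := hcheck r h0 h1
    have b3 := hgpos _ (h0.trans a1) a2
    have e1 : (1 - (1 - (1 - r) / K)) ^ α = (1 - r) ^ α / K ^ α := by
      rw [sub_sub_cancel, Real.div_rpow (by linarith) hK0.le]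
    rw [e1] at b1
    have hq : 0 ≤ (1 - r) ^ α / K ^ α :=
      div_nonneg (Real.rpow_nonneg (by linarith) α) hKα.le
    have b4 : (C - 1) / C * omHat ω r ≤ omHat ω r - omHat ω (1 - (1 - r) / K) := by
      rw [div_mul_eq_mul_div, div_le_iff₀ hC0]
      linarith
    have b5 := mul_le_mul_of_nonneg_left b4 hq
    have b6 : (1 - r) ^ α / K ^ α * ((C - 1) / C * omHat ω r)
        ≤ omHat (fun w => (1 - ‖w‖) ^ α * ω w) r := by linarith
    calc omHat ω r * (1 - r) ^ α
        = B * ((1 - r) ^ α / K ^ α * ((C - 1) / C * omHat ω r)) := by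
          rw [hB]; field_simp
      _ ≤ _ := mul_le_mul_of_nonneg_left b6 (by linarith)
  refine ⟨?_, ⟨?_, ?_⟩, ⟨?_, ?_⟩, ?_⟩
  · intro z w h
    simp only [h, hrad z w h]
  · intro z hz
    have hz' : ‖z‖ < 1 := hz
    exact mul_nonneg (Real.rpow_nonneg (by linarith) α) (hnn z hz)
  · have hms : MeasurableSet unitDisk := measurableSet_lt measurable_norm measurable_const
    refine Integrable.mono hint (hcont.aestronglyMeasurable.mul hint.1) ?_
    filter_upwards [ae_restrict_mem hms] with z hz
    have hz' : ‖z‖ < 1 := hz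
    have h3 : 0 ≤ 1 - ‖z‖ := by linarith
    have h4 : (1 - ‖z‖) ^ α ≤ 1 := Real.rpow_le_one h3 (by linarith [norm_nonneg z]) hα.le
    rw [norm_mul, Real.norm_of_nonneg (Real.rpow_nonneg h3 α)]
    exact mul_le_of_le_one_left (norm_nonneg _) h4
  · have h2α : 1 < (2 : ℝ) ^ α := Real.one_lt_rpow (by norm_num) hα
    refine ⟨C₁ * 2 ^ α * B, ?_, ?_⟩
    · have : 1 < C₁ * 2 ^ α := one_lt_mul_of_lt_of_le hC₁ h2α.le
      exact one_lt_mul_of_lt_of_le this hB1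
    · intro r h0 h1
      have d1 := hup r h0 h1
      have d2 := hhat r h0 h1
      have d3 := hlower ((1 + r) / 2) (by linarith) (by linarith)
      have e1 : (1 - (1 + r) / 2) ^ α = (1 - r) ^ α / 2 ^ α := by
        rw [← Real.div_rpow (by linarith) (by norm_num)]
        congr 1; ring
      rw [e1] at d3
      have hq : 0 ≤ (1 - r) ^ α := Real.rpow_nonneg (by linarith) α
      calc _ ≤ (1 - r) ^ α * omHat ω r := d1
        _ ≤ (1 - r) ^ α * (C₁ * omHat ω ((1 + r) / 2)) := mul_le_mul_of_nonneg_left d2 hq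
        _ = C₁ * 2 ^ α * (omHat ω ((1 + r) / 2) * ((1 - r) ^ α / 2 ^ α)) := by
          field_simp
        _ ≤ C₁ * 2 ^ α * (B * omHat (fun w => (1 - ‖w‖) ^ α * ω w) ((1 + r) / 2)) :=
          mul_le_mul_of_nonneg_left d3 (by positivity)
        _ = _ := by ring
  · refine ⟨C, hC, K, hK, ?_⟩
    intro r h0 h1
    obtain ⟨a1, a2⟩ := hρ r h0 h1
    have b1 := hlow r _ h0 a1 a2
    have b2 := hcheck r h0 h1
    have b3 := hup _ (h0.trans a1) a2
    have hq : 0 ≤ (1 - (1 - (1 - r) / K)) ^ α := Real.rpow_nonneg (by linarith) α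
    have b4 : (C - 1) * omHat ω (1 - (1 - r) / K)
        ≤ omHat ω r - omHat ω (1 - (1 - r) / K) := by linarith
    have b5 := mul_le_mul_of_nonneg_left b4 hq
    have b6 := mul_le_mul_of_nonneg_left b3 hC1.le
    linarith
  · refine ⟨B, hB1, ?_⟩
    intro z hz
    have hz' : ‖z‖ < 1 := hz
    have hB0 : 0 < B := by linarith
    constructor
    · rw [inv_mul_le_iff₀ hB0]
      exact hlower _ (norm_nonneg z) hz'
    · have d1 := hup _ (norm_nonneg z) hz'
      have : 0 ≤ omHat ω ‖z‖ * (1 - ‖z‖) ^ α :=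
        mul_nonneg (hpos _ (norm_nonneg z) hz').le (Real.rpow_nonneg (by linarith) α)
      have := le_mul_of_one_le_left this hB1
      linarith
end
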